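/- Let V ⊆ ℝ^d be a linear subspace, let m ≥ 1, and let φ_1, …, φ_m be line polynomials in pairwise non-parallel directions v_1, …, v_m. Assume c : ℤ^d → ℂ is V-periodic, is annihilated by the product φ_1 ⋯ φ_m, and that for all i ≠ j one has span_ℝ(v_i, v_j) ∩ V = {0}. Then there exist functions c_1, …, c_m : ℤ^d → ℂ with c = c_1 + … + c_m such that each c_i is annihilated by φ_i and each c_i is V-periodic. Moreover, if all φ_i are difference polynomials and c takes only integer values, then c_1, …, c_m can be chosen with integer values. -/

import Mathlib

namespace PaperFormal

/-- View an integer vector inside `ℝ^d`. -/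
def intVecR {d : ℕ} (u : Fin d → ℤ) : Fin d → ℝ := fun i => (u i : ℝ)

/-- View an integer vector inside `ℚ^d`. -/
def intVecQ {d : ℕ} (u : Fin d → ℤ) : Fin d → ℚ := fun i => (u i : ℚ)

/-- A (Laurent) polynomial: a finitely supported integer-valued function on `ℤ^d`. -/
def IsPoly {d : ℕ} (f : (Fin d → ℤ) → ℤ) : Prop := (Function.support f).Finite

/-- The product `(fc)(u) = ∑_v f(v) · c(u − v)` of a polynomial `f` with `c : ℤ^d → ℤ`. -/
noncomputable def polyApply {d : ℕ} (f : (Fin d → ℤ) → ℤ) (c : (Fin d → ℤ) → ℤ) :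
    (Fin d → ℤ) → ℤ := fun u => ∑ᶠ v, f v * c (u - v)

/-- The product `(fc)(u) = ∑_v f(v) · c(u − v)` of a polynomial `f` with `c : ℤ^d → ℂ`. -/
noncomputable def polyApplyC {d : ℕ} (f : (Fin d → ℤ) → ℤ) (c : (Fin d → ℤ) → ℂ) :
    (Fin d → ℤ) → ℂ := fun u => ∑ᶠ v, (f v : ℂ) * c (u - v)

/-- `c` is `v`-periodic: `c(u + v) = c(u)` for all `u`. -/
def Periodic {d : ℕ} (c : (Fin d → ℤ) → ℤ) (v : Fin d → ℤ) : Prop := ∀ u, c (u + v) = c u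

/-- `c : ℤ^d → ℂ` is `v`-periodic. -/
def PeriodicC {d : ℕ} (c : (Fin d → ℤ) → ℂ) (v : Fin d → ℤ) : Prop := ∀ u, c (u + v) = c u

/-- `c` is `k`-periodic: it has `k` periods that are linearly independent over `ℚ`. -/
def KPeriodic {d : ℕ} (k : ℕ) (c : (Fin d → ℤ) → ℤ) : Prop :=
  ∃ v : Fin k → (Fin d → ℤ),
    (LinearIndependent ℚ fun i => intVecQ (v i)) ∧ ∀ i, Periodic c (v i)

/-- `c` is strongly periodic: it is `d`-periodic. -/
def StronglyPeriodic {d : ℕ} (c : (Fin d → ℤ) → ℤ) : Prop := KPeriodic d c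

/-- `c : ℤ^d → ℂ` is strongly periodic. -/
def StronglyPeriodicC {d : ℕ} (c : (Fin d → ℤ) → ℂ) : Prop :=
  ∃ v : Fin d → (Fin d → ℤ),
    (LinearIndependent ℚ fun i => intVecQ (v i)) ∧ ∀ i, PeriodicC c (v i)

/-- Two nonzero integer vectors are non-parallel if they are linearly independent over `ℚ`. -/
def NonParallel {d : ℕ} (v w : Fin d → ℤ) : Prop :=
  LinearIndependent ℚ ![intVecQ v, intVecQ w]

/-- A line polynomial in direction `v`: a polynomial whose support contains at least two points
and is contained in `u + ℚv` for some `u ∈ ℤ^d`. -/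
def IsLinePoly {d : ℕ} (f : (Fin d → ℤ) → ℤ) (v : Fin d → ℤ) : Prop :=
  IsPoly f ∧ v ≠ 0 ∧ 2 ≤ (Function.support f).ncard ∧
    ∃ u : Fin d → ℤ, ∀ w ∈ Function.support f, ∃ q : ℚ, intVecQ w = intVecQ u + q • intVecQ v

/-- The difference polynomial `X^v − 1`: value `1` at `v`, value `−1` at `0`, and `0` elsewhere. -/
def diffPoly {d : ℕ} (v : Fin d → ℤ) : (Fin d → ℤ) → ℤ :=
  fun u => if u = v then 1 else if u = 0 then -1 else 0

/-- `c : ℤ^d → ℂ` is periodic in direction `v`: it is `kv`-periodic for some nonzero integer `k`. -/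
def PeriodicInDirC {d : ℕ} (c : (Fin d → ℤ) → ℂ) (v : Fin d → ℤ) : Prop :=
  ∃ k : ℤ, k ≠ 0 ∧ PeriodicC c (k • v)

/-- `c : ℤ^d → ℂ` is `V`-periodic for a linear subspace `V ⊆ ℝ^d`: it is periodic in
direction `v` for every nonzero integer vector `v` lying in `V`. -/
def VPeriodicC {d : ℕ} (V : Submodule ℝ (Fin d → ℝ)) (c : (Fin d → ℤ) → ℂ) : Prop :=
  ∀ v : Fin d → ℤ, v ≠ 0 → intVecR v ∈ V → PeriodicInDirC c v

/-- The discrete cube `C_m + t`. -/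
def cube {d : ℕ} (m : ℕ) (t : Fin d → ℤ) : Set (Fin d → ℤ) :=
  {u | ∀ i, |u i - t i| ≤ (m : ℤ)}

/-- `c : ℤ^d → ℤ` is sparse: for some positive integer `a`,
`|supp(c) ∩ (C_m + t)| ≤ a·m` for all positive `m` and all `t`. -/
def Sparse {d : ℕ} (c : (Fin d → ℤ) → ℤ) : Prop :=
  ∃ a : ℕ, 0 < a ∧ ∀ m : ℕ, 0 < m → ∀ t : Fin d → ℤ,
    (Function.support c ∩ cube m t).ncard ≤ a * m

/-- A `v`-fiber: a function whose support is contained in `w + ℚv` for some `w ∈ ℤ^d`. -/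
def IsFiber {d : ℕ} (e : (Fin d → ℤ) → ℤ) (v : Fin d → ℤ) : Prop :=
  ∃ w : Fin d → ℤ, ∀ x ∈ Function.support e, ∃ q : ℚ, intVecQ x = intVecQ w + q • intVecQ v

/-- `c` is a sum of finitely many periodic `v`-fibers. -/
def FinSumPeriodicFibers {d : ℕ} (v : Fin d → ℤ) (c : (Fin d → ℤ) → ℤ) : Prop :=
  ∃ (r : ℕ) (e : Fin r → ((Fin d → ℤ) → ℤ)), c = ∑ j, e j ∧
    ∀ j, IsFiber (e j) v ∧ ∃ w : Fin d → ℤ, w ≠ 0 ∧ Periodic (e j) w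

end PaperFormal
namespace PaperFormal

/-!
The functions on `ℤ^d` form a module over the commutative ring of Laurent polynomials. For two of
the directions, `vᵢ` and `vⱼ`, the hypotheses give a homomorphism `l : ℤ^d → ℤ` (a weight) with
`l vᵢ ≠ 0`, `l vⱼ = 0` and `l = 0` on the integer points of `V`. Such a weight separates the
exponents of `φᵢ`, so `φᵢ c = e` is a linear recurrence in the weight: it has exactly one solution
with given values on a strip whose width is the spread of the weights of `φᵢ`. Take the solution `c`
vanishing on the strip. If `h` is homogeneous for `l` and kills `e`, then `h c` is killed by `φᵢ`
and vanishes on a strip, so `h c = 0`. This applies to `h = φⱼ` and to `h = X^p - 1` for every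
period `p ∈ V` of `e`, and the decomposition follows by induction on the number of factors:
decompose `φ₁ c = e₂ + … + e_m`, solve `φ₁ cⱼ = eⱼ` in this way, and put `c₁ = c - c₂ - … - c_m`.
-/

open AddMonoidAlgebra Function

section Convolution

variable {R G M : Type*} [CommRing R] [AddCommGroup G] [AddCommGroup M] [Module R M]

variable (R G M) in
/-- The action of `G` on the functions `G → M` by translation, `g` taking `c` to `c(· - g)`. -/
def translation : Multiplicative G →* Module.End R (G → M) where
  toFun g := LinearMap.funLeft R M (· - g.toAdd)
  map_one' := by ext; simp [LinearMap.funLeft_apply]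
  map_mul' g h := by
    ext
    simp [LinearMap.funLeft_apply, sub_sub]

/-- Functions `G → M` form a module over the Laurent polynomials `R[G]`, with convolution as the
scalar multiplication. This is only a local instance because it would clash with the pointwise one
when `M` is itself an `R[G]`-module. -/
noncomputable abbrev convolutionModule : Module R[G] (G → M) :=
  Module.compHom _ (lift R _ G (translation R G M)).toRingHom

end Convolution

attribute [local instance] convolutionModule

section ConvolutionFormulas

variable {R G M N : Type*} [CommRing R] [AddCommGroup G] [AddCommGroup M] [Module R M]
  [AddCommGroup N] [Module R N]

theorem convolution_eq_lift (f : R[G]) (c : G → M) :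
    f • c = lift R _ G (translation R G M) f c := rfl

theorem convolution_apply (f : R[G]) (c : G → M) (u : G) :
    (f • c) u = ∑ v ∈ f.coeff.support, f.coeff v • c (u - v) := by
  simp [convolution_eq_lift, lift_apply, Finsupp.sum, translation, LinearMap.funLeft_apply]

theorem convolution_apply_congr {f : R[G]} {c c' : G → M} {u : G}
    (h : ∀ v ∈ f.coeff.support, c (u - v) = c' (u - v)) : (f • c) u = (f • c') u := by
  rw [convolution_apply, convolution_apply]
  exact Finset.sum_congr rfl fun v hv => by rw [h v hv]

theorem convolution_apply_add [DecidableEq G] (f : R[G]) (c : G → M) (x z : G) :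
    (f • c) (x + z) =
      f.coeff z • c x + ∑ y ∈ f.coeff.support.erase z, f.coeff y • c (x + z - y) := by
  rw [convolution_apply]
  by_cases hz : z ∈ f.coeff.support
  · rw [← Finset.add_sum_erase _ _ hz, add_sub_cancel_right]
  · rw [Finset.erase_eq_of_notMem hz, Finsupp.notMem_support_iff.1 hz, zero_smul, zero_add]

theorem convolution_comp (θ : M →ₗ[R] N) (f : R[G]) (c : G → M) : f • (θ ∘ c) = θ ∘ (f • c) := by
  ext u
  simp only [convolution_apply, comp_apply, map_sum, map_smul]

theorem single_sub_one_smul_eq_zero_iff {p : G} {c : G → M} :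
    (single p 1 - 1 : R[G]) • c = 0 ↔ Function.Periodic c p := by
  have h (g u : G) : ((single g 1 : R[G]) • c) u = c (u - g) := by
    simp [convolution_eq_lift, translation, LinearMap.funLeft_apply]
  rw [sub_smul, one_smul, sub_eq_zero, funext_iff]
  simp only [h]
  exact ⟨fun hc u => by simpa using (hc (u + p)).symm, fun hc u => hc.sub_eq u⟩

end ConvolutionFormulas

section HalfSpace

variable {R G M : Type*} [CommRing R] [AddCommGroup G] [AddCommGroup M] [Module R M]
  {l : G →+ ℤ} {f : R[G]} {z z₀ z₁ : G}

/-- `z` is the initial exponent of `f` for the weight `l`: every other exponent of `f` has a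
strictly larger weight. The final exponent is the initial one for `-l`. -/
def IsInitialExponent (l : G →+ ℤ) (f : R[G]) (z : G) : Prop :=
  ∀ y ∈ f.coeff.support, y ≠ z → l z < l y

theorem IsInitialExponent.le (hz : IsInitialExponent l f z) {y : G} (hy : y ∈ f.coeff.support) :
    l z ≤ l y := by
  obtain rfl | hne := eq_or_ne y z
  exacts [le_rfl, (hz y hy hne).le]

theorem exists_isInitialExponent (hf : f ≠ 0) (hinj : Set.InjOn l f.coeff.support) :
    ∃ z ∈ f.coeff.support, IsInitialExponent l f z := by
  obtain ⟨z, hz, hmin⟩ := f.coeff.support.exists_min_image l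
    (Finsupp.support_nonempty_iff.2 (coeff_eq_zero.not.2 hf))
  exact ⟨z, hz, fun y hy hne => (hmin y hy).lt_of_ne fun h => hne (hinj hy hz h.symm)⟩

theorem IsInitialExponent.eq_zero_of_smul_eq_zero (hz : IsInitialExponent l f z)
    (hinj : Injective (f.coeff z • · : M → M)) {c : G → M} {a : ℤ}
    (hlow : ∀ x, l x < a → c x = 0) (hc : f • c = 0) : c = 0 := by
  classical
  have vanish (n : ℕ) : ∀ x, l x < a + n → c x = 0 := by
    induction n with
    | zero => simpa using hlow
    | succ n ih =>
      intro x hx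
      have hsplit := convolution_apply_add f c x z
      rw [hc, Finset.sum_eq_zero, add_zero] at hsplit
      · exact hinj (by simpa using hsplit.symm)
      · intro y hy
        have hzy := hz y (Finset.mem_of_mem_erase hy) (Finset.ne_of_mem_erase hy)
        rw [ih, smul_zero]
        simp only [map_sub, map_add]
        omega
  ext x
  exact vanish (l x - a + 1).toNat x (by omega)

theorem IsInitialExponent.exists_smul_eq (hz : IsInitialExponent l f z)
    (hsurj : Surjective (f.coeff z • · : M → M)) {e : G → M} {a : ℤ}
    (he : ∀ y, l y < a + l z → e y = 0) :
    ∃ c : G → M, (∀ x, l x < a → c x = 0) ∧ f • c = e := by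
  classical
  obtain ⟨quot, hquot⟩ : ∃ quot : M → M, ∀ b, f.coeff z • quot b = b := hsurj.hasRightInverse
  have wf : WellFounded fun y x : G => (l y + 1 - a).toNat < (l x + 1 - a).toNat :=
    (measure fun x => (l x + 1 - a).toNat).wf
  have hdecr {x y : G} (hx : ¬ l x < a) (hy : y ∈ f.coeff.support.erase z) :
      (l (x + z - y) + 1 - a).toNat < (l x + 1 - a).toNat := by
    have hzy := hz y (Finset.mem_of_mem_erase hy) (Finset.ne_of_mem_erase hy)
    simp only [map_sub, map_add]
    omega
  let c : G → M := wf.fix fun x ih =>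
    if hx : l x < a then 0 else
      quot (e (x + z) - ∑ y ∈ (f.coeff.support.erase z).attach,
        f.coeff y • ih (x + z - y) (hdecr hx y.2))
  have hlow (x : G) (hx : l x < a) : c x = 0 := by
    simp only [c]
    rw [wf.fix_eq, dif_pos hx]
  have hrec (x : G) (hx : ¬ l x < a) : c x = quot (e (x + z) -
      ∑ y ∈ f.coeff.support.erase z, f.coeff y • c (x + z - y)) := by
    simp only [c]
    rw [wf.fix_eq, dif_neg hx, ← Finset.sum_attach (f.coeff.support.erase z)]
  refine ⟨c, hlow, funext fun y => ?_⟩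
  by_cases hy : l y < a + l z
  · rw [he y hy, convolution_apply_congr (c' := 0), smul_zero, Pi.zero_apply]
    intro v hv
    have hzv := hz.le hv
    exact hlow _ (by rw [map_sub]; omega)
  · obtain ⟨x, rfl⟩ : ∃ x, y = x + z := ⟨y - z, by simp⟩
    rw [convolution_apply_add, hrec x (by rw [map_add] at hy; omega), hquot, sub_add_cancel]

theorem eq_zero_of_smul_eq_zero_of_strip (hz₀ : IsInitialExponent l f z₀)
    (hz₁ : IsInitialExponent (-l) f z₁) (hinj₀ : Injective (f.coeff z₀ • · : M → M))
    (hinj₁ : Injective (f.coeff z₁ • · : M → M)) {c : G → M} {a : ℤ}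
    (hstrip : ∀ x, a ≤ l x → l x < a + (l z₁ - l z₀) → c x = 0) (hc : f • c = 0) : c = 0 := by
  have hbound {v : G} (hv : v ∈ f.coeff.support) : l z₀ ≤ l v ∧ l v ≤ l z₁ :=
    ⟨hz₀.le hv, by simpa using hz₁.le hv⟩
  have hupper : f • Set.indicator {x | a ≤ l x} c = 0 := by
    ext y
    by_cases hy : l y < a + l z₁
    · rw [convolution_apply_congr (c' := 0), smul_zero]
      intro v hv
      refine Set.indicator_apply_eq_zero.2 fun hx => hstrip _ hx ?_
      have hv' := hbound hv
      rw [map_sub]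
      omega
    · rw [convolution_apply_congr (c' := c), hc]
      intro v hv
      have hv' := hbound hv
      exact Set.indicator_of_mem (by rw [Set.mem_ofPred_eq, map_sub]; omega) c
  have hzero := hz₀.eq_zero_of_smul_eq_zero hinj₀ (a := a)
    (fun x hx => Set.indicator_of_notMem (by simpa using hx) c) hupper
  refine hz₁.eq_zero_of_smul_eq_zero hinj₁ (a := 1 - a) (fun x hx => ?_) hc
  rw [AddMonoidHom.neg_apply] at hx
  exact Set.indicator_apply_eq_zero.1 (congrFun hzero x) (show a ≤ l x by omega)

theorem exists_smul_eq_of_strip (hz₀ : IsInitialExponent l f z₀)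
    (hz₁ : IsInitialExponent (-l) f z₁) (hsurj₀ : Surjective (f.coeff z₀ • · : M → M))
    (hsurj₁ : Surjective (f.coeff z₁ • · : M → M)) (e : G → M) :
    ∃ c : G → M, (∀ x, 0 ≤ l x → l x < l z₁ - l z₀ → c x = 0) ∧ f • c = e := by
  -- The part of `e` of weight at least `l z₁` is divided by `f` upwards, the rest downwards.
  let upper : Set G := {y | l z₁ ≤ l y}
  obtain ⟨c₀, hlow, hc₀⟩ := hz₀.exists_smul_eq hsurj₀ (e := upper.indicator e) (a := l z₁ - l z₀)
    fun y hy => Set.indicator_of_notMem (by simpa [upper] using hy) e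
  obtain ⟨c₁, hhigh, hc₁⟩ := hz₁.exists_smul_eq hsurj₁ (e := upperᶜ.indicator e) (a := 1)
    fun y hy => Set.indicator_of_notMem (by
      simp only [AddMonoidHom.neg_apply] at hy
      simp only [upper, Set.mem_compl_iff, Set.mem_ofPred_eq, not_not]
      omega) e
  refine ⟨c₀ + c₁, fun x h0 h1 => ?_, ?_⟩
  · rw [Pi.add_apply, hlow x h1, hhigh x (by rw [AddMonoidHom.neg_apply]; omega), add_zero]
  · rw [smul_add, hc₀, hc₁, Set.indicator_self_add_compl]

end HalfSpace

section Decomposition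

variable {R G M ι : Type*} [CommRing R] [AddCommGroup G] [AddCommGroup M] [Module R M]

theorem exists_smul_eq_forall_homogeneous_smul_eq_zero {l : G →+ ℤ} {f : R[G]} (hf : f ≠ 0)
    (hinj : Set.InjOn l f.coeff.support)
    (hbij : ∀ z ∈ f.coeff.support, Bijective (f.coeff z • · : M → M)) (e : G → M) :
    ∃ c : G → M, f • c = e ∧
      ∀ h : R[G], SetLike.IsHomogeneousElem (gradeBy R l) h → h • e = 0 → h • c = 0 := by
  obtain ⟨z₀, hz₀, hinit⟩ := exists_isInitialExponent hf hinj
  obtain ⟨z₁, hz₁, hfinal⟩ := exists_isInitialExponent (l := -l) hf fun x hx y hy hxy =>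
    hinj hx hy (neg_injective hxy)
  obtain ⟨c, hstrip, hc⟩ :=
    exists_smul_eq_of_strip hinit hfinal (hbij z₀ hz₀).2 (hbij z₁ hz₁).2 e
  refine ⟨c, hc, fun h ⟨t, ht⟩ he => ?_⟩
  -- `h • c` is killed by `f` and vanishes on the strip shifted by the weight `t` of `h`.
  refine eq_zero_of_smul_eq_zero_of_strip hinit hfinal (hbij z₀ hz₀).1 (hbij z₁ hz₁).1 (a := t)
    (fun x hx₀ hx₁ => ?_) (by rw [smul_comm, hc, he])
  rw [convolution_apply_congr (c' := 0), smul_zero, Pi.zero_apply]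
  intro v hv
  have hlv : l v = t := (mem_gradeBy_iff R l t h).1 ht hv
  apply hstrip <;> rw [map_sub] <;> omega

theorem exists_sum_eq_of_prod_smul_eq_zero {φ : ι → R[G]} {l : ι → ι → G →+ ℤ}
    (hφ : ∀ i, φ i ≠ 0)
    (hbij : ∀ i, ∀ z ∈ (φ i).coeff.support, Bijective ((φ i).coeff z • · : M → M))
    (hinj : ∀ i j, i ≠ j → Set.InjOn (l i j) (φ i).coeff.support)
    (hhom : ∀ i j, i ≠ j → SetLike.IsHomogeneousElem (gradeBy R (l i j)) (φ j))
    (s : Finset ι) (c : G → M) (hc : (∏ i ∈ s, φ i) • c = 0) :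
    ∃ cs : ι → G → M, c = ∑ i ∈ s, cs i ∧ ∀ i ∈ s, φ i • cs i = 0 ∧
      ∀ h : R[G], (∀ i j, i ≠ j → SetLike.IsHomogeneousElem (gradeBy R (l i j)) h) →
        h • c = 0 → h • cs i = 0 := by
  classical
  induction s using Finset.induction_on generalizing c with
  | empty => exact ⟨0, by simpa using hc, by simp⟩
  | insert a s has ih =>
    rw [Finset.prod_insert has, mul_comm, mul_smul] at hc
    obtain ⟨es, hsum, hes⟩ := ih (φ a • c) hc
    have hne {i : ι} (hi : i ∈ s) : i ≠ a := ne_of_mem_of_not_mem hi has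
    choose! b hb hker using fun i (hi : i ∈ s) =>
      exists_smul_eq_forall_homogeneous_smul_eq_zero (hφ a) (hinj a i (hne hi).symm) (hbij a) (es i)
    have hb_hom (h : R[G]) (hh : ∀ i j, i ≠ j → SetLike.IsHomogeneousElem (gradeBy R (l i j)) h)
        (hhc : h • c = 0) (i : ι) (hi : i ∈ s) : h • b i = 0 :=
      hker i hi h (hh a i (hne hi).symm) <|
        (hes i hi).2 h hh (by rw [smul_comm, hhc, smul_zero])
    have hupdate {i : ι} (hi : i ∈ s) : update b a (c - ∑ j ∈ s, b j) i = b i :=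
      update_of_ne (hne hi) _ _
    refine ⟨update b a (c - ∑ j ∈ s, b j), ?_, fun i hi => ?_⟩
    · rw [Finset.sum_insert has, update_self, Finset.sum_congr rfl fun i hi => hupdate hi,
        sub_add_cancel]
    obtain rfl | hi := Finset.mem_insert.1 hi
    · rw [update_self]
      refine ⟨?_, fun h hh hhc => ?_⟩
      · rw [smul_sub, Finset.smul_sum, hsum, Finset.sum_congr rfl hb, sub_self]
      · rw [smul_sub, hhc, Finset.smul_sum, Finset.sum_eq_zero (hb_hom h hh hhc), sub_zero]
    · rw [hupdate hi]
      exact ⟨hker i hi _ (hhom a i (hne hi).symm) (hes i hi).1,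
        fun h hh hhc => hb_hom h hh hhc i hi⟩

end Decomposition

section Lines

variable {R G M ι : Type*} [CommRing R] [AddCommGroup G] [AddCommGroup M] [Module R M]

theorem exists_dual_ne_zero_of_smul_notMem {A E : Type*} [CommRing A] [IsDomain A]
    [IsPrincipalIdealRing A] [AddCommGroup E] [Module A E] [Module.Finite A E] (N : Submodule A E)
    {w : E} (hw : ∀ n : A, n ≠ 0 → n • w ∉ N) :
    ∃ l : Module.Dual A E, N ≤ LinearMap.ker l ∧ l w ≠ 0 := by
  let T := Submodule.torsion A (E ⧸ N)
  have hne : T.mkQ (N.mkQ w) ≠ 0 := by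
    rw [Submodule.mkQ_apply, Ne, Submodule.Quotient.mk_eq_zero, Submodule.mem_torsion_iff]
    rintro ⟨n, hn⟩
    refine hw n (nonZeroDivisors.coe_ne_zero n) ?_
    rwa [← Submodule.Quotient.mk_eq_zero, Submodule.Quotient.mk_smul]
  obtain ⟨l, hl⟩ := Module.Projective.exists_dual_ne_zero A hne
  refine ⟨l ∘ₗ T.mkQ ∘ₗ N.mkQ, fun x hx => ?_, hl⟩
  have hx₀ : N.mkQ x = 0 := (Submodule.Quotient.mk_eq_zero N).2 hx
  rw [LinearMap.mem_ker, LinearMap.comp_apply, LinearMap.comp_apply, hx₀, map_zero, map_zero]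

/-- The support of `f` lies on one rational line in direction `v`. As `G` need not sit inside a
rational vector space, this says that the difference of any two exponents has a nonzero integer
multiple in `ℤv`. -/
def IsSupportedOnLine (f : R[G]) (v : G) : Prop :=
  ∀ x ∈ f.coeff.support, ∀ y ∈ f.coeff.support, ∃ n k : ℤ, n ≠ 0 ∧ n • (x - y) = k • v

theorem IsSupportedOnLine.injOn [IsAddTorsionFree G] {f : R[G]} {v : G}
    (hf : IsSupportedOnLine f v) {l : G →+ ℤ} (hl : l v ≠ 0) : Set.InjOn l f.coeff.support := by
  intro x hx y hy hxy
  obtain ⟨n, k, hn, hnk⟩ := hf x hx y hy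
  have hk : k = 0 := by simpa [hxy, hl] using (congrArg l hnk).symm
  rw [hk, zero_smul] at hnk
  exact sub_eq_zero.1 ((smul_eq_zero.1 hnk).resolve_left hn)

theorem IsSupportedOnLine.isHomogeneousElem {f : R[G]} {v : G} (hf : IsSupportedOnLine f v)
    {l : G →+ ℤ} (hl : l v = 0) : SetLike.IsHomogeneousElem (gradeBy R l) f := by
  obtain rfl | hne := eq_or_ne f 0
  · exact ⟨0, zero_mem _⟩
  obtain ⟨y, hy⟩ := Finsupp.support_nonempty_iff.2 (coeff_eq_zero.not.2 hne)
  refine ⟨l y, (mem_gradeBy_iff R l _ f).2 fun x hx => ?_⟩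
  obtain ⟨n, k, hn, hnk⟩ := hf x hx y hy
  simpa [hl, hn, sub_eq_zero] using congrArg l hnk

theorem isHomogeneousElem_single_sub_one {l : G →+ ℤ} {p : G} (hp : l p = 0) :
    SetLike.IsHomogeneousElem (gradeBy R l) (single p 1 - 1 : R[G]) :=
  ⟨0, sub_mem (hp ▸ single_mem_gradeBy l p 1) (map_zero l ▸ single_mem_gradeBy l 0 1)⟩

theorem exists_weight_of_linearIndependent_mkQ [Module.Finite ℤ G] (P : Submodule ℤ G) {w v : G}
    (h : LinearIndependent ℤ ![P.mkQ w, P.mkQ v]) :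
    ∃ l : G →+ ℤ, l w ≠ 0 ∧ l v = 0 ∧ ∀ p ∈ P, l p = 0 := by
  obtain ⟨l, hker, hw⟩ := exists_dual_ne_zero_of_smul_notMem (P ⊔ ℤ ∙ v) (w := w) <| by
    intro n hn hmem
    obtain ⟨p, hp, _, hv, hpv⟩ := Submodule.mem_sup.1 hmem
    obtain ⟨k, rfl⟩ := Submodule.mem_span_singleton.1 hv
    refine hn (LinearIndependent.pair_iff.1 h n (-k) ?_).1
    rw [← map_smul, ← map_smul, ← map_add, ← hpv, neg_smul, add_neg_cancel_right]
    exact (Submodule.Quotient.mk_eq_zero P).2 hp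
  exact ⟨l.toAddMonoidHom, hw,
    hker (Submodule.mem_sup_right (Submodule.mem_span_singleton_self v)),
    fun p hp => hker (Submodule.mem_sup_left hp)⟩

theorem decomposition_along_line_polynomial_annihilator_general [Fintype ι] [Module.Finite ℤ G]
    [IsAddTorsionFree G] (P : Submodule ℤ G) (φ : ι → R[G]) (v : ι → G) (hφ : ∀ i, φ i ≠ 0)
    (hline : ∀ i, IsSupportedOnLine (φ i) (v i))
    (hbij : ∀ i, ∀ z ∈ (φ i).coeff.support, Bijective ((φ i).coeff z • · : M → M))
    (hindep : ∀ i j, i ≠ j → LinearIndependent ℤ ![P.mkQ (v i), P.mkQ (v j)])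
    (c : G → M) (hc : (∏ i, φ i) • c = 0) :
    ∃ cs : ι → G → M, c = ∑ i, cs i ∧ ∀ i, φ i • cs i = 0 ∧
      ∀ p ∈ P, Function.Periodic c p → Function.Periodic (cs i) p := by
  choose! l hl_ne hl_zero hlP using fun i j (hij : i ≠ j) =>
    exists_weight_of_linearIndependent_mkQ P (hindep i j hij)
  obtain ⟨cs, hsum, hcs⟩ := exists_sum_eq_of_prod_smul_eq_zero hφ hbij
    (fun i j hij => (hline i).injOn (hl_ne i j hij))
    (fun i j hij => (hline j).isHomogeneousElem (hl_zero i j hij)) Finset.univ c hc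
  refine ⟨cs, hsum, fun i => ⟨(hcs i (Finset.mem_univ i)).1, fun p hp hper => ?_⟩⟩
  rw [← single_sub_one_smul_eq_zero_iff (R := R)] at hper ⊢
  exact (hcs i (Finset.mem_univ i)).2 _
    (fun i j hij => isHomogeneousElem_single_sub_one (hlP i j hij p hp)) hper

end Lines

section IntegerLattice

variable {d m : ℕ} {f : (Fin d → ℤ) → ℤ}

/-- A polynomial in the sense of `IsPoly` as an element of the group algebra of `ℤ^d`. -/
noncomputable def IsPoly.toLaurent (hf : IsPoly f) : ℤ[Fin d → ℤ] :=
  ofCoeff (Finsupp.ofSupportFinite f hf)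

theorem IsPoly.coeff_toLaurent (hf : IsPoly f) (z : Fin d → ℤ) : hf.toLaurent.coeff z = f z := rfl

theorem IsPoly.mem_support_toLaurent (hf : IsPoly f) {z : Fin d → ℤ} :
    z ∈ hf.toLaurent.coeff.support ↔ f z ≠ 0 :=
  Finsupp.mem_support_iff

theorem IsPoly.polyApplyC_eq_smul (hf : IsPoly f) (c : (Fin d → ℤ) → ℂ) :
    polyApplyC f c = hf.toLaurent • c := by
  ext u
  rw [polyApplyC, convolution_apply,
    finsum_eq_sum_of_support_subset (s := hf.toLaurent.coeff.support)]
  · simp only [hf.coeff_toLaurent, zsmul_eq_mul]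
  · intro z hz
    exact hf.mem_support_toLaurent.2 fun h => hz (by simp [h])

theorem foldr_polyApplyC_ofFn {φ : Fin m → (Fin d → ℤ) → ℤ} (hφ : ∀ i, IsPoly (φ i))
    (c : (Fin d → ℤ) → ℂ) :
    (List.ofFn φ).foldr polyApplyC c = (∏ i, (hφ i).toLaurent) • c := by
  induction m with
  | zero => simp
  | succ m ih =>
    rw [List.ofFn_succ, List.foldr_cons, ih fun i => hφ i.succ, (hφ 0).polyApplyC_eq_smul,
      Fin.prod_univ_succ, mul_smul]

theorem IsLinePoly.toLaurent_ne_zero {v : Fin d → ℤ} (hf : IsLinePoly f v) :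
    hf.1.toLaurent ≠ 0 := by
  obtain ⟨z, hz⟩ := Set.nonempty_of_ncard_ne_zero (s := support f) (by have := hf.2.2.1; omega)
  exact fun h => hz (by rw [← hf.1.coeff_toLaurent, h, coeff_zero, Finsupp.zero_apply])

theorem IsLinePoly.isSupportedOnLine {v : Fin d → ℤ} (hf : IsLinePoly f v) :
    IsSupportedOnLine hf.1.toLaurent v := by
  obtain ⟨hpoly, -, -, u, hu⟩ := hf
  intro x hx y hy
  obtain ⟨q, hq⟩ := hu x (hpoly.mem_support_toLaurent.1 hx)
  obtain ⟨r, hr⟩ := hu y (hpoly.mem_support_toLaurent.1 hy)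
  refine ⟨(q - r).den, (q - r).num, by simp, funext fun i => ?_⟩
  have hxi : (x i : ℚ) = u i + q * v i := congrFun hq i
  have hyi : (y i : ℚ) = u i + r * v i := congrFun hr i
  have hclear : ((q - r).den : ℚ) * (x i - y i) = (q - r).num * v i := by
    rw [hxi, hyi, add_sub_add_left_eq_sub, ← sub_mul, ← mul_assoc, Rat.den_mul_eq_num]
  exact_mod_cast hclear

/-- The group of integer points of a real subspace `V`. -/
def latticePoints (V : Submodule ℝ (Fin d → ℝ)) : Submodule ℤ (Fin d → ℤ) :=
  (V.restrictScalars ℤ).comap ((Int.castAddHom ℝ).toIntLinearMap.compLeft (Fin d))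

theorem mem_latticePoints {V : Submodule ℝ (Fin d → ℝ)} {u : Fin d → ℤ} :
    u ∈ latticePoints V ↔ intVecR u ∈ V := Iff.rfl

theorem linearIndependent_mkQ_latticePoints {V : Submodule ℝ (Fin d → ℝ)} {v w : Fin d → ℤ}
    (hnp : NonParallel v w) (hspan : Submodule.span ℝ {intVecR v, intVecR w} ⊓ V = ⊥) :
    LinearIndependent ℤ ![(latticePoints V).mkQ v, (latticePoints V).mkQ w] := by
  refine LinearIndependent.pair_iff.2 fun a b hab => ?_
  have hV : intVecR (a • v + b • w) ∈ V := by
    rw [← mem_latticePoints, ← Submodule.Quotient.mk_eq_zero]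
    exact hab
  have hspan_mem : intVecR (a • v + b • w) ∈ Submodule.span ℝ {intVecR v, intVecR w} :=
    Submodule.mem_span_pair.2 ⟨a, b, funext fun i => by simp [intVecR]⟩
  have hzero : intVecR (a • v + b • w) = 0 := by
    rw [← Submodule.mem_bot ℝ, ← hspan]
    exact ⟨hspan_mem, hV⟩
  have hQ : (a : ℚ) • intVecQ v + (b : ℚ) • intVecQ w = 0 := by
    ext i
    have hi : (a : ℝ) * v i + b * w i = 0 := by simpa [intVecR] using congrFun hzero i
    simpa [intVecQ] using mod_cast hi
  exact_mod_cast LinearIndependent.pair_iff.1 hnp a b hQ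

theorem zsmul_bijective_of_inv_mul_mem {K : Type*} [DivisionRing K] [CharZero K]
    {A : AddSubgroup K} {n : ℤ} (hn : n ≠ 0) (hA : ∀ a ∈ A, (n : K)⁻¹ * a ∈ A) :
    Bijective (n • · : A → A) := by
  have hnK : (n : K) ≠ 0 := Int.cast_ne_zero.2 hn
  refine ⟨smul_right_injective A hn, fun a => ⟨⟨_, hA a a.2⟩, Subtype.ext ?_⟩⟩
  simp [hnK]

theorem exists_decomposition_of_forall_mem (V : Submodule ℝ (Fin d → ℝ)) (A : AddSubgroup ℂ)
    {φ : Fin m → (Fin d → ℤ) → ℤ} {v : Fin m → Fin d → ℤ}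
    (hline : ∀ i, IsLinePoly (φ i) (v i)) (hnp : ∀ i j, i ≠ j → NonParallel (v i) (v j))
    (hspan : ∀ i j, i ≠ j → Submodule.span ℝ {intVecR (v i), intVecR (v j)} ⊓ V = ⊥)
    (hA : ∀ i z, φ i z ≠ 0 → ∀ a ∈ A, (φ i z : ℂ)⁻¹ * a ∈ A)
    {c : (Fin d → ℤ) → ℂ} (hcA : ∀ u, c u ∈ A) (hcV : VPeriodicC V c)
    (hann : (List.ofFn φ).foldr polyApplyC c = 0) :
    ∃ cs : Fin m → (Fin d → ℤ) → ℂ, c = ∑ i, cs i ∧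
      ∀ i, (∀ u, cs i u ∈ A) ∧ polyApplyC (φ i) (cs i) = 0 ∧ VPeriodicC V (cs i) := by
  let incl : A →ₗ[ℤ] ℂ := A.subtype.toIntLinearMap
  have hincl : Injective incl := Subtype.val_injective
  obtain ⟨c, rfl⟩ : ∃ c' : (Fin d → ℤ) → A, incl ∘ c' = c := ⟨fun u => ⟨c u, hcA u⟩, rfl⟩
  rw [foldr_polyApplyC_ofFn fun i => (hline i).1, convolution_comp] at hann
  obtain ⟨cs, hsum, hcs⟩ := decomposition_along_line_polynomial_annihilator_general
    (latticePoints V) (fun i => (hline i).1.toLaurent) v (fun i => (hline i).toLaurent_ne_zero)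
    (fun i => (hline i).isSupportedOnLine)
    (fun i z hz => zsmul_bijective_of_inv_mul_mem (Finsupp.mem_support_iff.1 hz)
      (hA i z ((hline i).1.mem_support_toLaurent.1 hz)))
    (fun i j hij => linearIndependent_mkQ_latticePoints (hnp i j hij) (hspan i j hij)) c
    (funext fun u => hincl (by simpa using congrFun hann u))
  refine ⟨fun i => incl ∘ cs i, ?_, fun i => ⟨fun u => (cs i u).2, ?_, fun p hp hpV => ?_⟩⟩
  · ext u
    simp [hsum]
  · rw [(hline i).1.polyApplyC_eq_smul, convolution_comp, (hcs i).1]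
    ext u
    simp
  · obtain ⟨k, hk, hper⟩ := hcV p hp hpV
    refine ⟨k, hk, fun u => congrArg incl ((hcs i).2 (k • p) ?_ ?_ u)⟩
    · exact Submodule.smul_mem _ k (mem_latticePoints.2 hpV)
    · exact fun u => hincl (hper u)

theorem inv_mul_mem_of_isUnit {K : Type*} [DivisionRing K] {A : AddSubgroup K} {n : ℤ}
    (hn : IsUnit n) {a : K} (ha : a ∈ A) : (n : K)⁻¹ * a ∈ A := by
  obtain rfl | rfl := Int.isUnit_iff.1 hn
  · simpa using ha
  · simpa [inv_neg] using ha

theorem isUnit_diffPoly {w z : Fin d → ℤ} (hz : diffPoly w z ≠ 0) : IsUnit (diffPoly w z) := by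
  unfold diffPoly at hz ⊢
  split_ifs at hz ⊢
  · exact isUnit_one
  · exact isUnit_one.neg
  · exact absurd rfl hz

end IntegerLattice

/-- If `c` is `V`-periodic and annihilated by a product `φ₁ ⋯ φ_m` of line
polynomials in pairwise non-parallel directions `v₁, …, v_m` with `span_ℝ(v_i, v_j) ∩ V = {0}`
for `i ≠ j`, then `c = c₁ + … + c_m` where each `c_i` is annihilated by `φ_i` and is
`V`-periodic; moreover with integer values if all `φ_i` are difference polynomials and `c` is
integer-valued. -/
theorem decomposition_along_line_polynomial_annihilator
    {d m : ℕ} (hm : 1 ≤ m) (V : Submodule ℝ (Fin d → ℝ))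
    (φ : Fin m → ((Fin d → ℤ) → ℤ)) (v : Fin m → (Fin d → ℤ))
    (hline : ∀ i, IsLinePoly (φ i) (v i))
    (hnp : ∀ i j, i ≠ j → NonParallel (v i) (v j))
    (hspan : ∀ i j, i ≠ j → Submodule.span ℝ {intVecR (v i), intVecR (v j)} ⊓ V = ⊥)
    (c : (Fin d → ℤ) → ℂ) (hcV : VPeriodicC V c)
    (hann : (List.ofFn φ).foldr polyApplyC c = 0) :
    (∃ cs : Fin m → ((Fin d → ℤ) → ℂ), c = ∑ i, cs i ∧
      ∀ i, polyApplyC (φ i) (cs i) = 0 ∧ VPeriodicC V (cs i)) ∧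
    ((∀ u, ∃ z : ℤ, c u = (z : ℂ)) → (∀ i, ∃ w : Fin d → ℤ, w ≠ 0 ∧ φ i = diffPoly w) →
      ∃ cs : Fin m → ((Fin d → ℤ) → ℂ), c = ∑ i, cs i ∧
        ∀ i, (∀ u, ∃ z : ℤ, cs i u = (z : ℂ)) ∧
          polyApplyC (φ i) (cs i) = 0 ∧ VPeriodicC V (cs i)) := by
  constructor
  · obtain ⟨cs, hsum, hcs⟩ := exists_decomposition_of_forall_mem V ⊤ hline hnp hspan
      (fun _ _ _ _ _ => AddSubgroup.mem_top _) (fun _ => AddSubgroup.mem_top _) hcV hann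
    exact ⟨cs, hsum, fun i => (hcs i).2⟩
  · intro hint hdiff
    have hunit (i : Fin m) (z : Fin d → ℤ) (hz : φ i z ≠ 0) : IsUnit (φ i z) := by
      obtain ⟨w, -, hw⟩ := hdiff i
      rw [hw] at hz ⊢
      exact isUnit_diffPoly hz
    obtain ⟨cs, hsum, hcs⟩ := exists_decomposition_of_forall_mem V (Int.castAddHom ℂ).range hline
      hnp hspan (fun i z hz _ ha => inv_mul_mem_of_isUnit (hunit i z hz) ha)
      (fun u => (hint u).imp fun _ => Eq.symm) hcV hann
    exact ⟨cs, hsum, fun i => ⟨fun u => ((hcs i).1 u).imp fun _ => Eq.symm, (hcs i).2⟩⟩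

end PaperFormal
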